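/- The Riemann Hypothesis holds if and only if Re(λ_n) > 0 for every integer n ≥ 1, where λ_n is the n-th Li coefficient of the Riemann zeta function. (Li's criterion; the case F = ζ of the generalized Li criterion, Theorem 2.1.) -/

import Mathlib

open Complex

/-- The Riemann xi function `ξ(s) = s(s-1)π^{-s/2}Γ(s/2)ζ(s)`, written as the entire
function `s(s-1)Λ₀(s) + 1` where `Λ₀` is the completed Riemann zeta function. -/
noncomputable def riemannXi (s : ℂ) : ℂ := s * (s - 1) * completedRiemannZeta₀ s + 1

/-- The `n`-th Li coefficient `λ_n = (1/(n-1)!) dⁿ/dsⁿ [s^{n-1} log ξ(s)]` at `s = 1`. -/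
noncomputable def liCoeff (n : ℕ) : ℂ :=
  (1 / ((n - 1).factorial : ℂ)) *
    iteratedDeriv n (fun s => s ^ (n - 1) * Complex.log (riemannXi s)) 1

lemma xi_differentiable : Differentiable ℂ riemannXi := by
  unfold riemannXi
  have := differentiable_completedZeta₀
  fun_prop

lemma xi_zero : riemannXi 0 = 1 := by simp [riemannXi]
lemma xi_one : riemannXi 1 = 1 := by simp [riemannXi]

lemma xi_one_sub (s : ℂ) : riemannXi (1 - s) = riemannXi s := by
  simp only [riemannXi, completedRiemannZeta₀_one_sub]; ring

lemma xi_eq {s : ℂ} (h0 : s ≠ 0) (h1 : s ≠ 1) :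
    riemannXi s = s * (s - 1) * completedRiemannZeta s := by
  rw [riemannXi, completedRiemannZeta_eq]
  have : 1 - s ≠ 0 := sub_ne_zero.mpr h1.symm
  field_simp
  ring

lemma xi_eq' {s : ℂ} (h0 : 0 < s.re) (h1 : s ≠ 1) :
    riemannXi s = s * (s - 1) * (Gammaℝ s * riemannZeta s) := by
  have hs : s ≠ 0 := by rintro rfl; simp at h0
  rw [xi_eq hs h1, riemannZeta_def_of_ne_zero hs, mul_div_cancel₀]
  exact Gammaℝ_ne_zero_of_re_pos h0

lemma xi_ne_zero_of_one_le {s : ℂ} (h : 1 ≤ s.re) : riemannXi s ≠ 0 := by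
  by_cases h1 : s = 1
  · simp [h1, xi_one]
  have hs : s ≠ 0 := by rintro rfl; norm_num at h
  rw [xi_eq' (by linarith) h1]
  exact mul_ne_zero (mul_ne_zero hs (sub_ne_zero.mpr h1))
    (mul_ne_zero (Gammaℝ_ne_zero_of_re_pos (by linarith)) (riemannZeta_ne_zero_of_one_le_re h))

lemma xi_zero_strip {s : ℂ} (h : riemannXi s = 0) : 0 < s.re ∧ s.re < 1 ∧ riemannZeta s = 0 := by
  have a : s.re < 1 := by
    by_contra! h'; exact xi_ne_zero_of_one_le h' h
  have b : 0 < s.re := by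
    by_contra! h'
    exact xi_ne_zero_of_one_le (s := 1 - s) (by simpa using h') (by rw [xi_one_sub, h])
  refine ⟨b, a, ?_⟩
  have h1 : s ≠ 1 := by rintro rfl; simp at a
  have hs : s ≠ 0 := by rintro rfl; simp at b
  rw [xi_eq' b h1] at h
  simpa [hs, sub_ne_zero.mpr h1, Gammaℝ_ne_zero_of_re_pos b] using h

lemma xi_eq_zero {s : ℂ} (h0 : 0 < s.re) (h1 : s.re < 1) (h : riemannZeta s = 0) :
    riemannXi s = 0 := by
  rw [xi_eq' h0 (by rintro rfl; simp at h1), h]; simp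

/-- factorization -/
lemma factor_max {f : ℂ → ℂ} (hf : Differentiable ℂ f) (h0 : f 0 = 1) {R : ℝ} (hR : 0 < R)
    {M : ℝ} (hM : ∀ s ∈ Metric.sphere (0:ℂ) (3 * R), ‖f s‖ ≤ M) :
    ∃ (Z : List ℂ) (E : ℂ → ℂ), Differentiable ℂ E ∧ E 0 = 1 ∧
      (∀ ρ ∈ Z, f ρ = 0 ∧ ρ ≠ 0) ∧ (∀ s, f s = (Z.map (fun ρ => 1 - s / ρ)).prod * E s) ∧
      (∀ s, ‖s‖ ≤ R → E s ≠ 0) ∧ (∀ s, ‖s‖ ≤ 3 * R → ‖E s‖ ≤ M) := by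
  let Good : List ℂ → (ℂ → ℂ) → Prop := fun Z E => Differentiable ℂ E ∧ E 0 = 1 ∧
      (∀ ρ ∈ Z, f ρ = 0 ∧ ρ ≠ 0 ∧ ‖ρ‖ ≤ R) ∧ (∀ s, f s = (Z.map (fun ρ => 1 - s / ρ)).prod * E s)
  have prodbd : ∀ (Z : List ℂ) s, ‖s‖ = 3 * R → (∀ ρ ∈ Z, ρ ≠ 0 ∧ ‖ρ‖ ≤ R) →
      2 ^ Z.length ≤ ‖(Z.map (fun ρ => 1 - s / ρ)).prod‖ := by
    intro Z s hs
    induction Z with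
    | nil => intro _; simp
    | cons a Z ih =>
      intro h
      have h1 := ih (fun ρ hρ => h ρ (List.mem_cons_of_mem _ hρ))
      obtain ⟨ha, haR⟩ := h a List.mem_cons_self
      have h2 : 2 ≤ ‖1 - s / a‖ := by
        have : 3 ≤ ‖s / a‖ := by
          rw [norm_div, hs, le_div_iff₀ (norm_pos_iff.mpr ha)]; linarith
        have h3 := norm_sub_norm_le (s / a) 1
        rw [norm_sub_rev, norm_one] at h3
        linarith
      simp only [List.map_cons, List.prod_cons, List.length_cons, norm_mul, pow_succ']
      gcongr
  have Ebd : ∀ Z E, Good Z E → ∀ s, ‖s‖ ≤ 3 * R → ‖E s‖ ≤ M / 2 ^ Z.length := by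
    intro Z E ⟨hE, hE0, hZ, hfE⟩ s hs
    refine Complex.norm_le_of_forall_mem_frontier_norm_le (U := Metric.ball 0 (3 * R))
      Metric.isBounded_ball hE.diffContOnCl ?_ ?_
    · intro z hz
      rw [frontier_ball _ (by positivity)] at hz
      have h1 := hM z hz
      have h2 := prodbd Z z (by simpa using hz) (fun ρ hρ => (hZ ρ hρ).2)
      rw [hfE, norm_mul] at h1
      rw [le_div_iff₀ (by positivity), mul_comm]
      exact le_trans (by gcongr) h1
    · rw [closure_ball _ (by positivity)]; simpa using hs
  have lenbd : ∀ Z E, Good Z E → (2:ℝ) ^ Z.length ≤ M := by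
    intro Z E hG
    have := Ebd Z E hG 0 (by simp; positivity)
    rw [hG.2.1, norm_one, le_div_iff₀ (by positivity), one_mul] at this
    exact this
  obtain ⟨N, hN⟩ := pow_unbounded_of_one_lt M (one_lt_two)
  have hlt : ∀ Z E, Good Z E → Z.length ≤ N := by
    intro Z E hG
    by_contra! h
    have h1 := lenbd Z E hG
    have h2 : (2:ℝ) ^ N ≤ 2 ^ Z.length := by gcongr; norm_num
    linarith
  have key : ∃ Z E, Good Z E ∧ ∀ s, ‖s‖ ≤ R → E s ≠ 0 := by
    by_contra! hcon
    have step : ∀ k : ℕ, ∃ Z E, Good Z E ∧ Z.length = k := by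
      intro k
      induction k with
      | zero => exact ⟨[], f, ⟨hf, h0, by simp, by simp⟩, rfl⟩
      | succ k ih =>
        obtain ⟨Z, E, hG, hl⟩ := ih
        obtain ⟨ρ, hρR, hρ⟩ := hcon Z E hG
        obtain ⟨hE, hE0, hZ, hfE⟩ := hG
        have hρ0 : ρ ≠ 0 := by rintro rfl; simp [hE0] at hρ
        have hd : Differentiable ℂ (dslope E ρ) := by
          rw [← differentiableOn_univ] at hE ⊢
          exact (Complex.differentiableOn_dslope Filter.univ_mem).mpr hE
        have hfac : ∀ s, E s = (1 - s / ρ) * (-ρ * dslope E ρ s) := by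
          intro s
          have := sub_smul_dslope E ρ s
          rw [hρ, sub_zero, smul_eq_mul] at this
          rw [← this]
          field_simp
          ring
        refine ⟨ρ :: Z, fun s => -ρ * dslope E ρ s, ⟨by fun_prop, ?_, ?_, ?_⟩, by simp [hl]⟩
        · have := hfac 0
          simpa [hE0] using this.symm
        · intro r hr
          rcases List.mem_cons.mp hr with rfl | hr
          · exact ⟨by rw [hfE, hρ, mul_zero], hρ0, hρR⟩
          · exact hZ r hr
        · intro s
          rw [hfE, hfac s]
          simp only [List.map_cons, List.prod_cons]; ring
    obtain ⟨Z, E, hG, hl⟩ := step (N + 1)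
    have := hlt Z E hG
    omega
  obtain ⟨Z, E, hG, hne⟩ := key
  refine ⟨Z, E, hG.1, hG.2.1, fun ρ hρ => ⟨(hG.2.2.1 ρ hρ).1, (hG.2.2.1 ρ hρ).2.1⟩, hG.2.2.2, hne, ?_⟩
  intro s hs
  refine (Ebd Z E hG s hs).trans ?_
  have hM0 : 0 ≤ M := le_trans (by positivity) (lenbd Z E hG)
  exact div_le_self hM0 (one_le_pow₀ (by norm_num))

lemma exists_log_ball {f : ℂ → ℂ} {r : ℝ} (hr : 0 < r)
    (hf : DifferentiableOn ℂ f (Metric.ball 0 r))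
    (hne : ∀ z ∈ Metric.ball (0:ℂ) r, f z ≠ 0) (h0 : f 0 = 1) :
    ∃ h : ℂ → ℂ, h 0 = 0 ∧ (∀ z ∈ Metric.ball (0:ℂ) r, HasDerivAt h (logDeriv f z) z) ∧
      ∀ z ∈ Metric.ball (0:ℂ) r, Complex.exp (h z) = f z := by
  have hd : DifferentiableOn ℂ (logDeriv f) (Metric.ball 0 r) :=
    (hf.deriv Metric.isOpen_ball).div hf hne
  obtain ⟨h, hh0, hh⟩ := hd.isExactOn_ball.with_val_at 0 0
  refine ⟨h, hh0, hh, ?_⟩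
  have hder : ∀ z ∈ Metric.ball (0:ℂ) r, HasDerivAt (fun z => f z * Complex.exp (-h z)) 0 z := by
    intro z hz
    have h1 := (hf.differentiableAt (Metric.isOpen_ball.mem_nhds hz)).hasDerivAt
    have h2 := h1.mul ((hh z hz).neg.cexp)
    convert! h2 using 1
    simp only [logDeriv_apply]
    have := hne z hz
    field_simp
    simp
  intro z hz
  have hc := (convex_ball (0:ℂ) r).is_const_of_fderivWithin_eq_zero (𝕜 := ℂ)
    (f := fun z => f z * Complex.exp (-h z))
    (fun z hz => (hder z hz).differentiableAt.differentiableWithinAt)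
    (fun z hz => by
      rw [fderivWithin_of_isOpen Metric.isOpen_ball hz]
      ext; simp [(hder z hz).deriv]) hz (Metric.mem_ball_self hr)
  simp only [hh0, h0, neg_zero, Complex.exp_zero, mul_one] at hc
  rw [Complex.exp_neg] at hc
  field_simp at hc
  exact hc.symm

lemma logDeriv_est {E : ℂ → ℂ} (hE : Differentiable ℂ E) (h0 : E 0 = 1) {R A : ℝ} (hR : 0 < R)
    (hA : 0 < A) (hne : ∀ s, ‖s‖ ≤ R → E s ≠ 0) (hbd : ∀ s, ‖s‖ ≤ R → ‖E s‖ ≤ Real.exp A)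
    {s : ℂ} (hs : ‖s‖ ≤ R / 4) :
    ‖logDeriv E s - logDeriv E 0‖ ≤ 64 * A / R ^ 2 * ‖s‖ := by
  have hb : ∀ z ∈ Metric.ball (0:ℂ) R, ‖z‖ ≤ R := fun z hz => by
    simpa using (Metric.mem_ball.mp hz).le
  obtain ⟨h, hh0, hh, hexp⟩ := exists_log_ball hR hE.differentiableOn (fun z hz => hne z (hb z hz)) h0
  have hhd : DifferentiableOn ℂ h (Metric.ball 0 R) := fun z hz =>
    (hh z hz).differentiableAt.differentiableWithinAt
  have hre : Set.MapsTo h (Metric.ball 0 R) {z | z.re ≤ A} := by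
    intro z hz
    have := hbd z (hb z hz)
    rw [← hexp z hz, Complex.norm_exp, Real.exp_le_exp] at this
    exact this
  have hb2 : ∀ z, ‖z‖ ≤ R / 2 → ‖h z‖ ≤ 2 * A := by
    intro z hz
    have h1 := Complex.borelCaratheodory_zero hA hhd hre hR (z := z)
      (by simp; linarith) hh0
    refine h1.trans ?_
    rw [div_le_iff₀ (by linarith)]
    nlinarith
  have h2 : ∀ z ∈ Metric.closedBall (0:ℂ) (R/4), ‖deriv (logDeriv E) z‖ ≤ 64 * A / R ^ 2 := by
    intro z hz
    have hz' : ‖z‖ ≤ R / 4 := by simpa using hz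
    have hsub : ∀ w ∈ Metric.closedBall z (R/4), ‖w‖ ≤ R / 2 := by
      intro w hw
      rw [mem_closedBall_iff_norm] at hw
      have := norm_add_le (w - z) z
      rw [sub_add_cancel] at this
      linarith
    have hC := Complex.norm_iteratedDeriv_le_of_forall_mem_sphere_norm_le (c := z) (R := R / 4)
      (C := 2 * A) (f := h) 2 (by positivity) ?_ ?_
    · have heq : iteratedDeriv 2 h z = deriv (logDeriv E) z := by
        rw [iteratedDeriv_succ, iteratedDeriv_one]
        apply Filter.EventuallyEq.deriv_eq
        filter_upwards [Metric.isOpen_ball.mem_nhds (show z ∈ Metric.ball (0:ℂ) R by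
          simp; linarith)] with w hw
        exact (hh w hw).deriv
      rw [heq] at hC
      refine hC.trans (le_of_eq ?_)
      simp [Nat.factorial]; field_simp; norm_num
    · apply DifferentiableOn.diffContOnCl
      rw [closure_ball _ (by positivity)]
      refine hhd.mono ?_
      intro w hw
      have := hsub w hw
      simp; linarith
    · intro w hw
      exact hb2 w (hsub w (Metric.sphere_subset_closedBall hw))
  have h3 := (convex_closedBall (0:ℂ) (R/4)).norm_image_sub_le_of_norm_deriv_le (𝕜 := ℂ)
    (f := logDeriv E) (x := 0) (y := s) (C := 64 * A / R ^ 2) ?_ h2 (by simp; positivity) (by simpa using hs)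
  · simpa using h3
  · intro z hz
    have hz' : ‖z‖ ≤ R / 4 := by simpa using hz
    exact (hE.analyticAt z).deriv.differentiableAt.div (hE z) (hne z (by linarith))

lemma iter_diff {g : ℂ → ℂ} {U : Set ℂ} (hU : IsOpen U) (hg : DifferentiableOn ℂ g U) (n : ℕ) {s : ℂ}
    (hs : s ∈ U) : DifferentiableAt ℂ (iteratedDeriv n g) s := by
  rw [iteratedDeriv_eq_iterate]
  exact ((hg.analyticOnNhd hU).iterated_deriv n s hs).differentiableAt

lemma iter_id_mul {g : ℂ → ℂ} {U : Set ℂ} (hU : IsOpen U) (hg : DifferentiableOn ℂ g U) (n : ℕ) :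
    ∀ s ∈ U, iteratedDeriv (n + 1) (fun s => s * g s) s =
      s * iteratedDeriv (n + 1) g s + (n + 1) * iteratedDeriv n g s := by
  induction n with
  | zero =>
    intro s hs
    have := (hg.differentiableAt (hU.mem_nhds hs)).hasDerivAt
    simp only [zero_add, iteratedDeriv_one, iteratedDeriv_zero]
    refine Eq.trans ((hasDerivAt_id' s).mul this).deriv ?_
    simp; ring
  | succ n ih =>
    intro s hs
    rw [iteratedDeriv_succ, Filter.EventuallyEq.deriv_eq
      (f := fun s => s * iteratedDeriv (n + 1) g s + (n + 1) * iteratedDeriv n g s)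
      (by filter_upwards [hU.mem_nhds hs] with w hw using ih w hw)]
    have h1 := (iter_diff hU hg (n+1) hs).hasDerivAt
    have h2 := (iter_diff hU hg n hs).hasDerivAt
    have h3 := (((hasDerivAt_id' s).mul h1).add (h2.const_mul ((n:ℂ)+1))).deriv
    rw [← iteratedDeriv_succ, ← iteratedDeriv_succ] at h3
    refine Eq.trans h3 ?_
    push_cast
    ring

lemma iter_mobius {L : ℂ → ℂ} {U : Set ℂ} (hU : IsOpen U) (hL : DifferentiableOn ℂ L U) (n : ℕ) :
    ∀ z, z ≠ 1 → (1 - z)⁻¹ ∈ U → iteratedDeriv (n + 1) (fun z => L ((1 - z)⁻¹)) z =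
      ((1 - z)⁻¹) ^ (n + 2) * iteratedDeriv (n + 1) (fun s => s ^ n * L s) ((1 - z)⁻¹) := by
  have hm : ∀ z : ℂ, z ≠ 1 → HasDerivAt (fun z : ℂ => (1 - z)⁻¹) (((1 - z)⁻¹) ^ 2) z := by
    intro z hz
    have h1 : (1:ℂ) - z ≠ 0 := sub_ne_zero.mpr hz.symm
    have := ((hasDerivAt_id' z).const_sub 1).inv h1
    convert! this using 1
    simp
  have hW : ∀ z : ℂ, z ≠ 1 → (1 - z)⁻¹ ∈ U → ∀ᶠ w in nhds z, w ≠ 1 ∧ (1 - w)⁻¹ ∈ U := by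
    intro z hz hzU
    exact (isOpen_ne.mem_nhds hz |> fun h => (show ∀ᶠ w in nhds z, w ≠ 1 from h)).and
      ((hm z hz).continuousAt.preimage_mem_nhds (hU.mem_nhds hzU))
  induction n with
  | zero =>
    intro z hz hzU
    have h1 := (hL.differentiableAt (hU.mem_nhds hzU)).hasDerivAt
    simp only [zero_add, iteratedDeriv_one, pow_zero, one_mul]
    have := (h1.comp z (hm z hz)).deriv
    refine Eq.trans this ?_
    ring
  | succ n ih =>
    intro z hz hzU
    have hg : DifferentiableOn ℂ (fun s => s ^ n * L s) U := by fun_prop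
    rw [iteratedDeriv_succ, Filter.EventuallyEq.deriv_eq
      (f := fun z => ((1 - z)⁻¹) ^ (n + 2) * iteratedDeriv (n + 1) (fun s => s ^ n * L s) ((1 - z)⁻¹))
      (by filter_upwards [hW z hz hzU] with w hw using ih w hw.1 hw.2)]
    have h1 := (iter_diff hU hg (n+1) hzU).hasDerivAt
    have h2 := (((hm z hz).pow (n+2)).mul (h1.comp z (hm z hz))).deriv
    rw [← iteratedDeriv_succ] at h2
    refine Eq.trans h2 ?_
    have h3 := iter_id_mul hU hg (n+1) _ hzU
    have h4 : (fun s => s ^ (n+1) * L s) = fun s => s * (s ^ n * L s) := by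
      funext s; ring
    rw [h4, h3]
    simp only [Function.comp, Pi.pow_apply]
    push_cast
    ring

noncomputable def liPhi (z : ℂ) : ℂ := riemannXi ((1 - z)⁻¹)

lemma liCoeff_eq (n : ℕ) : liCoeff (n + 1) =
    (1 / (n.factorial : ℂ)) * iteratedDeriv n (logDeriv liPhi) 0 := by
  let U : Set ℂ := riemannXi ⁻¹' Complex.slitPlane
  have hU : IsOpen U := Complex.isOpen_slitPlane.preimage xi_differentiable.continuous
  have hL : DifferentiableOn ℂ (fun s => Complex.log (riemannXi s)) U :=
    fun s hs => ((xi_differentiable s).clog hs).differentiableWithinAt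
  have h1U : (1 - (0:ℂ))⁻¹ ∈ U := by simp [U, xi_one]
  have h := iter_mobius hU hL n 0 zero_ne_one h1U
  simp only [sub_zero, inv_one, one_pow, one_mul] at h
  rw [liCoeff, Nat.add_sub_cancel, ← h, iteratedDeriv_succ']
  congr 1
  apply Filter.EventuallyEq.iteratedDeriv_eq
  have hc : ContinuousAt (fun z : ℂ => (1 - z)⁻¹) 0 := by
    apply ContinuousAt.inv₀ (by fun_prop) (by simp)
  filter_upwards [hc.preimage_mem_nhds (hU.mem_nhds h1U), isOpen_ne.mem_nhds (zero_ne_one (α := ℂ))] with z hz hz1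
  have hz2 : (1:ℂ) - z ≠ 0 := sub_ne_zero.mpr (Ne.symm hz1)
  have hphi : DifferentiableAt ℂ liPhi z := by
    unfold liPhi
    exact (xi_differentiable _).comp z (by fun_prop (disch := assumption))
  exact (hphi.hasDerivAt.clog hz).deriv

lemma mellin_strip_bound {f : ℝ → ℂ} (hf : ∀ s, MellinConvergent f s) :
    ∃ K, ∀ s : ℂ, 0 ≤ s.re → s.re ≤ 1 → ‖mellin f s‖ ≤ K := by
  have h0 := (hf 0).norm
  have h1 := (hf 1).norm
  refine ⟨∫ t in Set.Ioi (0:ℝ), (fun t : ℝ => ‖(t:ℂ) ^ ((0:ℂ) - 1) • f t‖ + ‖(t:ℂ) ^ ((1:ℂ) - 1) • f t‖) t,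
    fun s hs0 hs1 => ?_⟩
  refine MeasureTheory.norm_integral_le_of_norm_le (h0.add h1) ?_
  filter_upwards [MeasureTheory.ae_restrict_mem measurableSet_Ioi] with t ht
  have ht : 0 < t := ht
  simp only [Pi.add_apply, norm_smul, Complex.norm_cpow_eq_rpow_re_of_pos ht, sub_re, zero_re, one_re]
  rw [← add_mul]
  gcongr
  rcases le_total t 1 with h | h
  · have : t ^ (s.re - 1) ≤ t ^ ((0:ℝ) - 1) :=
      Real.rpow_le_rpow_of_exponent_ge ht h (by linarith)
    have : 0 ≤ t ^ ((1:ℝ) - 1) := by positivity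
    linarith
  · have : t ^ (s.re - 1) ≤ t ^ ((1:ℝ) - 1) :=
      Real.rpow_le_rpow_of_exponent_le h (by linarith)
    have : 0 ≤ t ^ ((0:ℝ) - 1) := by positivity
    linarith

lemma zeta0_strip : ∃ K, ∀ s : ℂ, 0 ≤ s.re → s.re ≤ 2 → ‖completedRiemannZeta₀ s‖ ≤ K := by
  obtain ⟨K, hK⟩ := mellin_strip_bound (f := (HurwitzZeta.hurwitzEvenFEPair 0).f_modif)
    (fun s => ((HurwitzZeta.hurwitzEvenFEPair 0).isStrongFEPair_toStrongFEPair.hasMellin s).1)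
  refine ⟨K / 2, fun s h0 h2 => ?_⟩
  have := hK (s / 2) (by simp; linarith) (by simp; linarith)
  change ‖(mellin (HurwitzZeta.hurwitzEvenFEPair 0).f_modif (s / 2)) / 2‖ ≤ K / 2
  rw [norm_div]
  simp only [Complex.norm_ofNat]
  gcongr

lemma zeta_bound : ∃ K, 0 ≤ K ∧ ∀ s : ℂ, 2 ≤ s.re → ‖riemannZeta s‖ ≤ K := by
  have hsum : Summable (fun n : ℕ => 1 / ((n:ℝ) + 1) ^ 2) := by
    have := (summable_nat_add_iff 1).mpr (Real.summable_one_div_nat_pow.mpr one_lt_two)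
    simpa using this
  refine ⟨∑' n : ℕ, 1 / ((n:ℝ) + 1) ^ 2, tsum_nonneg (fun n => by positivity), fun s hs => ?_⟩
  rw [zeta_eq_tsum_one_div_nat_add_one_cpow (by linarith)]
  refine tsum_of_norm_bounded hsum.hasSum (fun n => ?_)
  rw [norm_div, norm_one]
  have h1 : (1:ℝ) ≤ (n:ℝ) + 1 := by linarith [Nat.cast_nonneg (α := ℝ) n]
  have h2 : ‖((n:ℂ) + 1) ^ s‖ = ((n:ℝ) + 1) ^ s.re := by
    have := Complex.norm_cpow_eq_rpow_re_of_pos (show 0 < (n:ℝ) + 1 by positivity) s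
    push_cast at this
    exact this
  rw [h2]
  have h3 : ((n:ℝ) + 1) ^ 2 ≤ ((n:ℝ) + 1) ^ s.re := by
    rw [← Real.rpow_two]
    exact Real.rpow_le_rpow_of_exponent_le h1 hs
  gcongr

lemma norm_Gamma_le_fact {s : ℂ} {n : ℕ} (h1 : 1 ≤ s.re) (h2 : s.re ≤ n + 1) :
    ‖Complex.Gamma s‖ ≤ n.factorial := by
  have hs : 0 < s.re := by linarith
  have hle : ‖Complex.Gamma s‖ ≤ Real.Gamma s.re := by
    rw [Complex.Gamma_eq_integral hs, Real.Gamma_eq_integral hs, Complex.GammaIntegral]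
    refine MeasureTheory.norm_integral_le_of_norm_le (Real.GammaIntegral_convergent hs) ?_
    filter_upwards [MeasureTheory.ae_restrict_mem measurableSet_Ioi] with t ht
    rw [norm_mul, Complex.norm_cpow_eq_rpow_re_of_pos ht]
    simp [Complex.norm_exp]
  have hc := Real.convexOn_Gamma.le_max_of_mem_Icc (x := 1) (y := (n:ℝ) + 1) (z := s.re)
    (by simp) (by simp; positivity) ⟨h1, h2⟩
  rw [Real.Gamma_one, Real.Gamma_nat_eq_factorial] at hc
  refine hle.trans (hc.trans (max_le ?_ le_rfl))
  exact_mod_cast Nat.one_le_iff_ne_zero.mpr (Nat.factorial_ne_zero n)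

lemma zeta0_bound : ∃ K, 0 ≤ K ∧ ∀ (n : ℕ) (s : ℂ), ‖s‖ + 1 ≤ n →
    ‖completedRiemannZeta₀ s‖ ≤ K * n.factorial := by
  obtain ⟨K1, hK1⟩ := zeta0_strip
  obtain ⟨K2, hK20, hK2⟩ := zeta_bound
  have hK10 : 0 ≤ K1 := (norm_nonneg _).trans (hK1 0 (by simp) (by simp))
  have main : ∀ (n : ℕ) (s : ℂ), 0 ≤ s.re → s.re ≤ n →
      ‖completedRiemannZeta₀ s‖ ≤ (K1 + K2 + 2) * n.factorial := by
    intro n s h0 hn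
    have hf : (1:ℝ) ≤ n.factorial := by
      exact_mod_cast Nat.one_le_iff_ne_zero.mpr (Nat.factorial_ne_zero n)
    rcases le_total s.re 2 with h2 | h2
    · refine (hK1 s h0 h2).trans ?_
      nlinarith
    · have hs0 : s ≠ 0 := by rintro rfl; norm_num at h2
      have hG : ‖Gammaℝ s‖ ≤ n.factorial := by
        rw [Gammaℝ_def, norm_mul]
        have h3 : ‖(Real.pi : ℂ) ^ (-s / 2)‖ ≤ 1 := by
          rw [Complex.norm_cpow_eq_rpow_re_of_pos Real.pi_pos]
          apply Real.rpow_le_one_of_one_le_of_nonpos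
          · linarith [Real.pi_gt_three]
          · simp; linarith
        have h4 : ‖Gamma (s / 2)‖ ≤ n.factorial := by
          apply norm_Gamma_le_fact
          · simp; linarith
          · simp; linarith
        calc _ ≤ 1 * (n.factorial : ℝ) := by gcongr
          _ = _ := one_mul _
      have heq : completedRiemannZeta₀ s = Gammaℝ s * riemannZeta s + 1 / s + 1 / (1 - s) := by
        rw [riemannZeta_def_of_ne_zero hs0, mul_div_cancel₀ _ (Gammaℝ_ne_zero_of_re_pos (by linarith)),
          completedRiemannZeta_eq]
        ring
      have h5 : ‖1 / s‖ ≤ 1 := by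
        rw [norm_div, norm_one]
        apply div_le_one_of_le₀ _ (norm_nonneg _)
        exact le_trans (by linarith) (Complex.re_le_norm s)
      have h6 : ‖1 / (1 - s)‖ ≤ 1 := by
        rw [norm_div, norm_one]
        apply div_le_one_of_le₀ _ (norm_nonneg _)
        rw [norm_sub_rev]
        refine le_trans ?_ (Complex.re_le_norm (s - 1))
        simp; linarith
      rw [heq]
      calc _ ≤ ‖Gammaℝ s‖ * ‖riemannZeta s‖ + 1 + 1 := by
            refine (norm_add_le _ _).trans (add_le_add ((norm_add_le _ _).trans (add_le_add ?_ h5)) h6)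
            rw [norm_mul]
        _ ≤ n.factorial * K2 + 1 + 1 := by gcongr; exact hK2 s h2
        _ ≤ _ := by nlinarith
  refine ⟨K1 + K2 + 2, by positivity, fun n s hn => ?_⟩
  have hre := Complex.abs_re_le_norm s
  rw [abs_le] at hre
  rcases le_total 0 s.re with h | h
  · exact main n s h (by linarith)
  · rw [← completedRiemannZeta₀_one_sub]
    exact main n (1 - s) (by simp; linarith) (by simp; linarith)

lemma xi_growth {ε : ℝ} (hε : 0 < ε) : ∃ R₀ : ℝ, ∀ R, R₀ ≤ R → ∀ s : ℂ, ‖s‖ ≤ R →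
    ‖riemannXi s‖ ≤ Real.exp (ε * R ^ 2) := by
  obtain ⟨K, hK0, hK⟩ := zeta0_bound
  have hlog : ∀ᶠ x : ℝ in Filter.atTop, Real.log x ≤ ε / 32 * x := by
    have := Real.isLittleO_log_id_atTop.bound (show 0 < ε / 32 by positivity)
    filter_upwards [this, Filter.eventually_ge_atTop 1] with x hx h1
    simp only [Real.norm_eq_abs, id] at hx
    rw [abs_of_nonneg (show (0:ℝ) ≤ x by linarith)] at hx
    exact (le_abs_self _).trans hx
  obtain ⟨X, hX⟩ := Filter.eventually_atTop.mp hlog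
  refine ⟨max (max X 2) K, fun R hR s hs => ?_⟩
  simp only [max_le_iff] at hR
  obtain ⟨⟨hRX, hR2⟩, hRK⟩ := hR
  set n := ⌈R + 1⌉₊ with hn
  have hn1 : R + 1 ≤ n := Nat.le_ceil _
  have hn2 : (n:ℝ) ≤ 2 * R := by
    have := (Nat.ceil_lt_add_one (show 0 ≤ R + 1 by linarith)).le
    linarith
  have hn0 : (0:ℝ) < n := by linarith
  have hl : Real.log n ≤ ε * R / 16 := by
    have := hX n (by linarith)
    nlinarith
  have hl0 : 0 ≤ Real.log n := Real.log_natCast_nonneg n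
  have hf : (1:ℝ) ≤ n.factorial := by
    exact_mod_cast Nat.one_le_iff_ne_zero.mpr (Nat.factorial_ne_zero n)
  have h1 : ‖riemannXi s‖ ≤ (n:ℝ) ^ 3 * n.factorial + 1 := by
    rw [riemannXi]
    refine (norm_add_le _ _).trans ?_
    rw [norm_one, norm_mul, norm_mul]
    have a1 : ‖s‖ ≤ n := by linarith
    have a2 : ‖s - 1‖ ≤ n := by
      refine (norm_sub_le _ _).trans ?_
      rw [norm_one]; linarith
    have a3 : ‖completedRiemannZeta₀ s‖ ≤ n * n.factorial := by
      refine (hK n s (by linarith)).trans ?_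
      gcongr
      linarith
    calc ‖s‖ * ‖s - 1‖ * ‖completedRiemannZeta₀ s‖ + 1 ≤ (n:ℝ) * n * (n * n.factorial) + 1 := by gcongr
      _ = _ := by ring
  have h2 : (n:ℝ) ^ 3 * n.factorial + 1 ≤ (n:ℝ) ^ 4 * n.factorial := by
    have b1 : (1:ℝ) ≤ (n:ℝ) ^ 3 := one_le_pow₀ (by linarith)
    have b2 : (1:ℝ) ≤ (n:ℝ) ^ 3 * n.factorial := one_le_mul_of_one_le_of_one_le b1 hf
    have b3 : (n:ℝ) ^ 4 * n.factorial = n * ((n:ℝ) ^ 3 * n.factorial) := by ring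
    rw [b3]
    nlinarith
  have h3 : (n.factorial : ℝ) ≤ (n:ℝ) ^ n := by exact_mod_cast Nat.factorial_le_pow n
  have h4 : (n:ℝ) ^ 4 * (n:ℝ) ^ n = Real.exp ((4 + n) * Real.log n) := by
    rw [← pow_add, ← Real.rpow_natCast, Real.rpow_def_of_pos hn0]
    push_cast
    ring_nf
  calc ‖riemannXi s‖ ≤ (n:ℝ) ^ 4 * n.factorial := h1.trans h2
    _ ≤ (n:ℝ) ^ 4 * (n:ℝ) ^ n := by gcongr
    _ = Real.exp ((4 + n) * Real.log n) := h4
    _ ≤ Real.exp (ε * R ^ 2) := by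
      apply Real.exp_le_exp.mpr
      calc (4 + n) * Real.log n ≤ (4 + 2 * R) * (ε * R / 16) := by gcongr
        _ ≤ ε * R ^ 2 := by
          have : 0 < ε * R := by positivity
          nlinarith

lemma xi_lower (m : ℕ) (hm : 1 ≤ m) :
    (m.factorial : ℝ) ≤ Real.pi ^ (m + 1) * ‖riemannXi (2 * (m + 1 : ℕ))‖ := by
  have hs : (2 * (m + 1 : ℕ) : ℂ).re = 2 * (m + 1) := by simp
  rw [xi_eq' (by rw [hs]; positivity) (by
    intro h
    have := congrArg Complex.re h
    rw [hs] at this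
    have hmm : (0:ℝ) ≤ m := by positivity
    simp at this
    linarith)]
  have hz : 1 ≤ ‖riemannZeta (2 * (m + 1 : ℕ))‖ := by
    have h := zeta_nat_eq_tsum_of_gt_one (k := 2 * (m + 1)) (by omega)
    have hsum : Summable (fun n : ℕ => 1 / (n:ℝ) ^ (2 * (m + 1))) :=
      Real.summable_one_div_nat_pow.mpr (by omega)
    have h' : riemannZeta (2 * (m + 1 : ℕ)) = ((∑' n : ℕ, 1 / (n:ℝ) ^ (2 * (m + 1)) : ℝ) : ℂ) := by
      push_cast
      push_cast at h
      exact h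
    rw [h', Complex.norm_real]
    refine le_trans ?_ (le_abs_self _)
    have := hsum.le_tsum 1 (fun j _ => by positivity)
    simpa using this
  have hG : ‖Gammaℝ (2 * (m + 1 : ℕ))‖ = (Real.pi ^ (m + 1))⁻¹ * m.factorial := by
    rw [Gammaℝ_def, norm_mul]
    congr 1
    · rw [Complex.norm_cpow_eq_rpow_re_of_pos Real.pi_pos]
      rw [← Real.rpow_natCast, ← Real.rpow_neg Real.pi_pos.le]
      congr 1
      simp
      ring
    · rw [mul_div_cancel_left₀ _ two_ne_zero]
      push_cast
      rw [Complex.Gamma_nat_eq_factorial]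
      simp
  have h1 : 1 ≤ ‖(2 * (m + 1 : ℕ) : ℂ)‖ := by
    refine le_trans ?_ (Complex.re_le_norm _)
    rw [hs]; have hmm : (0:ℝ) ≤ m := by positivity
    linarith
  have h2 : 1 ≤ ‖(2 * (m + 1 : ℕ) : ℂ) - 1‖ := by
    refine le_trans ?_ (Complex.re_le_norm _)
    rw [sub_re, hs]; have hmm : (0:ℝ) ≤ m := by positivity
    simp; linarith
  generalize (2 * (m + 1 : ℕ) : ℂ) = x at *
  rw [norm_mul, norm_mul, norm_mul, hG]
  have hpi : Real.pi ^ (m + 1) ≠ 0 := by positivity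
  calc (m.factorial : ℝ) = Real.pi ^ (m + 1) * (1 * 1 * ((Real.pi ^ (m + 1))⁻¹ * m.factorial * 1)) := by
        field_simp
    _ ≤ _ := by gcongr

lemma liPhi_diffAt {z : ℂ} (hz : z ≠ 1) : DifferentiableAt ℂ liPhi z := by
  have hz2 : (1:ℂ) - z ≠ 0 := sub_ne_zero.mpr (Ne.symm hz)
  unfold liPhi
  exact (xi_differentiable _).comp z (by fun_prop (disch := assumption))

lemma liPhi_zero : liPhi 0 = 1 := by simp [liPhi, xi_one]

/-- If all Li coefficients have nonnegative real part, then `liPhi` has no zero in the disc. -/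
lemma liPhi_ne_zero (hpos : ∀ n : ℕ, 1 ≤ n → 0 < (liCoeff n).re) (z : ℂ) (hz : ‖z‖ < 1) :
    liPhi z ≠ 0 := by
  intro hzero
  have hne1 : ∀ w : ℂ, ‖w‖ < 1 → w ≠ 1 := by rintro w hw rfl; simp at hw
  have hcont : ContinuousOn liPhi (Metric.closedBall 0 ‖z‖) := fun w hw =>
    (liPhi_diffAt (hne1 w (by
      have : ‖w‖ ≤ ‖z‖ := by simpa using hw
      linarith))).continuousAt.continuousWithinAt
  -- a zero of minimal modulus
  have hcomp : IsCompact (Metric.closedBall (0:ℂ) ‖z‖ ∩ liPhi ⁻¹' {0}) := by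
    refine (isCompact_closedBall _ _).of_isClosed_subset
      (hcont.preimage_isClosed_of_isClosed Metric.isClosed_closedBall isClosed_singleton)
      Set.inter_subset_left
  obtain ⟨z0, ⟨hz0b, hz0⟩, hmin⟩ := hcomp.exists_isMinOn ⟨z, by simp, hzero⟩
    (continuous_norm.continuousOn (s := Metric.closedBall (0:ℂ) ‖z‖ ∩ liPhi ⁻¹' {0}))
  have hz0 : liPhi z0 = 0 := hz0
  have hz0z : ‖z0‖ ≤ ‖z‖ := by simpa using hz0b
  set r := ‖z0‖ with hr
  have hr0 : 0 < r := by
    rw [hr, norm_pos_iff]; rintro rfl; simp [liPhi_zero] at hz0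
  have hr1 : r < 1 := by linarith
  have hne : ∀ w ∈ Metric.ball (0:ℂ) r, liPhi w ≠ 0 := by
    intro w hw h
    have hw' : ‖w‖ < r := by simpa using hw
    have : r ≤ ‖w‖ := hmin (a := w) ⟨by simp; linarith, h⟩
    linarith
  have hdiff : DifferentiableOn ℂ liPhi (Metric.ball 0 r) := fun w hw =>
    (liPhi_diffAt (hne1 w (by
      have hw' : ‖w‖ < r := by simpa using hw
      linarith))).differentiableWithinAt
  obtain ⟨F, hF0, hFd, hFe⟩ := exists_log_ball hr0 hdiff hne liPhi_zero
  have hFdiff : DifferentiableOn ℂ F (Metric.ball 0 r) := fun w hw =>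
    (hFd w hw).differentiableAt.differentiableWithinAt
  let a : ℕ → ℂ := fun n => (n.factorial : ℂ)⁻¹ * iteratedDeriv n F 0
  have ha : ∀ n, 0 ≤ (a n).re := by
    intro n
    cases n with
    | zero => simp [a, hF0]
    | succ n =>
      have h1 : iteratedDeriv (n + 1) F 0 = iteratedDeriv n (logDeriv liPhi) 0 := by
        rw [iteratedDeriv_succ']
        apply Filter.EventuallyEq.iteratedDeriv_eq
        filter_upwards [Metric.isOpen_ball.mem_nhds (Metric.mem_ball_self hr0)] with w hw
        exact (hFd w hw).deriv
      have h2 : a (n + 1) = ((1 / ((n:ℝ) + 1) : ℝ) : ℂ) * liCoeff (n + 1) := by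
        simp only [a]
        rw [h1, liCoeff_eq, Nat.factorial_succ]
        push_cast
        field_simp
      rw [h2, Complex.re_ofReal_mul]
      have := (hpos (n + 1) (by omega)).le
      positivity
  have hser : ∀ w ∈ Metric.ball (0:ℂ) r, HasSum (fun n => a n * w ^ n) (F w) := by
    intro w hw
    have := Complex.hasSum_taylorSeries_on_ball hFdiff hw
    convert! this using 2 with n
    simp only [a, smul_eq_mul, sub_zero]
    ring
  obtain ⟨M, hM⟩ := (isCompact_closedBall (0:ℂ) r).exists_bound_of_continuousOn
    (hcont.mono (Metric.closedBall_subset_closedBall hz0z))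
  have hM1 : 1 ≤ M := by simpa [liPhi_zero] using hM 0 (by simp [hr0.le])
  have key : ∀ w ∈ Metric.ball (0:ℂ) r,
      Real.exp (-(2 * Real.log M)) ≤ ‖liPhi w‖ * ‖liPhi ((starRingEnd ℂ) w)‖ := by
    intro w hw
    have hw' : ‖w‖ < r := by simpa using hw
    have hcw : (starRingEnd ℂ) w ∈ Metric.ball (0:ℂ) r := by simpa using hw
    have hnw : ((‖w‖ : ℝ) : ℂ) ∈ Metric.ball (0:ℂ) r := by simpa using hw
    have s1 := hser w hw
    have s2 := (Complex.hasSum_conj'.mpr (by simpa using hser _ hcw) : HasSum (fun n => (starRingEnd ℂ) (a n * ((starRingEnd ℂ) w) ^ n)) ((starRingEnd ℂ) (F ((starRingEnd ℂ) w))))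
    have s3 := s1.add s2
    have s4 := (Complex.hasSum_re (hser _ hnw)).mul_left 2
    have hle := tsum_of_norm_bounded (s4) (f := fun n => a n * w ^ n + (starRingEnd ℂ) (a n * ((starRingEnd ℂ) w) ^ n)) (by
      intro n
      have e1 : a n * w ^ n + (starRingEnd ℂ) (a n * ((starRingEnd ℂ) w) ^ n)
          = ((2 * (a n).re : ℝ) : ℂ) * w ^ n := by
        rw [map_mul, map_pow, Complex.conj_conj, ← add_mul, Complex.add_conj]
      rw [e1, norm_mul, Complex.norm_real, norm_pow, Real.norm_of_nonneg (by linarith [ha n])]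
      rw [← Complex.ofReal_pow, Complex.re_mul_ofReal]
      linarith)
    rw [s3.tsum_eq] at hle
    have hFr : (F ((‖w‖ : ℝ) : ℂ)).re ≤ Real.log M := by
      have h1 := hM ((‖w‖ : ℝ) : ℂ) (Metric.ball_subset_closedBall hnw)
      rw [← hFe _ hnw, Complex.norm_exp] at h1
      exact (Real.le_log_iff_exp_le (by linarith)).mpr h1
    have hre : -(2 * Real.log M) ≤ (F w).re + (F ((starRingEnd ℂ) w)).re := by
      have h2 := Complex.abs_re_le_norm (F w + (starRingEnd ℂ) (F ((starRingEnd ℂ) w)))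
      rw [Complex.add_re, Complex.conj_re] at h2
      have := (abs_le.mp (h2.trans hle)).1
      linarith
    rw [← hFe w hw, ← hFe _ hcw, Complex.norm_exp, Complex.norm_exp, ← Real.exp_add]
    exact Real.exp_le_exp.mpr hre
  -- pass to the limit
  have hz0c : ContinuousAt liPhi z0 := (liPhi_diffAt (hne1 z0 hr1)).continuousAt
  have hz0c' : ContinuousAt liPhi ((starRingEnd ℂ) z0) :=
    (liPhi_diffAt (hne1 _ (by simpa using hr1))).continuousAt
  have hcl : z0 ∈ closure (Metric.ball (0:ℂ) r) := by
    rw [closure_ball _ hr0.ne']; simp [hr]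
  have hfin := ContinuousWithinAt.closure_le (s := Metric.ball (0:ℂ) r) (x := z0)
    (f := fun _ => Real.exp (-(2 * Real.log M)))
    (g := fun w => ‖liPhi w‖ * ‖liPhi ((starRingEnd ℂ) w)‖) hcl
    continuousWithinAt_const
    ((hz0c.norm.mul (ContinuousAt.comp (g := fun w => ‖liPhi w‖) hz0c'.norm
      Complex.continuous_conj.continuousAt)).continuousWithinAt) key
  simp only [hz0, norm_zero, zero_mul] at hfin
  exact absurd hfin (not_le.mpr (Real.exp_pos _))

lemma rh_of_li (hpos : ∀ n : ℕ, 1 ≤ n → 0 < (liCoeff n).re) (s : ℂ) (h0 : 0 < s.re)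
    (h1 : s.re < 1) (hz : riemannZeta s = 0) : s.re = 1 / 2 := by
  have main : ∀ s : ℂ, riemannXi s = 0 → s.re ≤ 1 / 2 := by
    intro s hs
    by_contra! h
    have hs0 : s ≠ 0 := by rintro rfl; norm_num at h
    refine liPhi_ne_zero hpos (1 - s⁻¹) ?_ (by simp [liPhi, hs])
    have : 1 - s⁻¹ = (s - 1) / s := by field_simp
    rw [this, norm_div, div_lt_one (norm_pos_iff.mpr hs0), ← sq_lt_sq₀ (norm_nonneg _) (norm_nonneg _),
      Complex.sq_norm, Complex.sq_norm, Complex.normSq_apply, Complex.normSq_apply]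
    simp
    nlinarith
  have hx := xi_eq_zero h0 h1 hz
  have a := main s hx
  have b := main (1 - s) (by rw [xi_one_sub, hx])
  simp at b
  linarith

lemma list_prod_bound (Z : List ℂ) : ∃ A : ℝ, 0 ≤ A ∧ ∀ s : ℂ,
    ‖(Z.map (fun ρ => 1 - s / ρ)).prod‖ ≤ Real.exp (A * ‖s‖) := by
  induction Z with
  | nil => exact ⟨0, le_rfl, fun s => by simp⟩
  | cons ρ Z ih =>
    obtain ⟨A, hA, h⟩ := ih
    refine ⟨‖ρ‖⁻¹ + A, by positivity, fun s => ?_⟩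
    rw [List.map_cons, List.prod_cons, norm_mul, add_mul, Real.exp_add]
    gcongr
    · refine (norm_sub_le _ _).trans ?_
      rw [norm_one, norm_div, div_eq_inv_mul, add_comm]
      exact Real.add_one_le_exp _
    · exact h s

lemma list_prod_lower (Z : List ℂ) {B : ℝ} (hB : ∀ ρ ∈ Z, ρ ≠ 0 ∧ ‖ρ‖ ≤ B) {s : ℂ}
    (hs : 2 * B ≤ ‖s‖) : 1 ≤ ‖(Z.map (fun ρ => 1 - s / ρ)).prod‖ := by
  induction Z with
  | nil => simp
  | cons ρ Z ih =>
    rw [List.map_cons, List.prod_cons, norm_mul]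
    have h1 := ih (fun ρ h => hB ρ (List.mem_cons_of_mem _ h))
    obtain ⟨h0, hb⟩ := hB ρ List.mem_cons_self
    have hp : 0 < ‖ρ‖ := norm_pos_iff.mpr h0
    have h2 : 1 ≤ ‖1 - s / ρ‖ := by
      have := norm_sub_norm_le (s / ρ) 1
      rw [norm_sub_rev, norm_one, norm_div] at this
      have h3 : 2 ≤ ‖s‖ / ‖ρ‖ := by rw [le_div_iff₀ hp]; linarith
      linarith
    nlinarith

/-- The zeros of `riemannXi` are unbounded. -/
lemma xi_zeros_unbounded (B : ℝ) : ∃ ρ, riemannXi ρ = 0 ∧ B < ‖ρ‖ := by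
  by_contra! hB'
  obtain ⟨B, hB0, hB⟩ : ∃ B : ℝ, 0 < B ∧ ∀ ρ, riemannXi ρ = 0 → ‖ρ‖ ≤ B :=
    ⟨max B 1, by positivity, fun ρ h => (hB' ρ h).trans (le_max_left _ _)⟩
  obtain ⟨M, hM⟩ := (isCompact_sphere (0:ℂ) (3 * B)).exists_bound_of_continuousOn
    xi_differentiable.continuous.continuousOn
  obtain ⟨Z, E, hE, hE0, hZ, hfac, hne, -⟩ := factor_max xi_differentiable xi_zero hB0 hM
  have hEne : ∀ s, E s ≠ 0 := by
    intro s h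
    exact hne s (hB s (by rw [hfac, h, mul_zero])) h
  have hZB : ∀ ρ ∈ Z, ρ ≠ 0 ∧ ‖ρ‖ ≤ B := fun ρ h => ⟨(hZ ρ h).2, hB ρ (hZ ρ h).1⟩
  have hD : ∀ s, logDeriv E s = logDeriv E 0 := by
    intro s
    rw [← sub_eq_zero, ← norm_le_zero_iff]
    refine le_of_forall_pos_le_add fun δ hδ => ?_
    obtain ⟨R₀, hR₀⟩ := xi_growth (ε := δ / (64 * (‖s‖ + 1))) (by positivity)
    let R := max (max R₀ (2 * B)) (4 * ‖s‖)
    have hR1 : R₀ ≤ R := (le_max_left _ _).trans (le_max_left _ _)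
    have hR2 : 2 * B ≤ R := (le_max_right _ _).trans (le_max_left _ _)
    have hR3 : 4 * ‖s‖ ≤ R := le_max_right _ _
    have hR : 0 < R := by linarith
    have hbd : ∀ z, ‖z‖ ≤ R → ‖E z‖ ≤ Real.exp (δ / (64 * (‖s‖ + 1)) * R ^ 2) := by
      intro z hz
      refine Complex.norm_le_of_forall_mem_frontier_norm_le (U := Metric.ball 0 R)
        Metric.isBounded_ball hE.diffContOnCl (fun w hw => ?_) ?_
      · rw [frontier_ball _ hR.ne'] at hw
        have hw' : ‖w‖ = R := by simpa using hw
        refine le_trans ?_ (hR₀ R hR1 w hw'.le)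
        rw [hfac, norm_mul]
        exact le_mul_of_one_le_left (norm_nonneg _) (list_prod_lower Z hZB (by linarith))
      · rw [closure_ball _ hR.ne']; simpa using hz
    refine (logDeriv_est hE hE0 hR (by positivity) (fun s _ => hEne s) hbd
      (s := s) (by linarith)).trans ?_
    rw [zero_add]
    have e : 64 * (δ / (64 * (‖s‖ + 1)) * R ^ 2) / R ^ 2 * ‖s‖ = δ * (‖s‖ / (‖s‖ + 1)) := by
      field_simp
    rw [e]
    refine mul_le_of_le_one_right hδ.le ?_
    rw [div_le_one (by positivity)]; linarith
  set b := logDeriv E 0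
  have hEexp : ∀ s, E s = Complex.exp (b * s) := by
    have hder : ∀ z, HasDerivAt (fun z => E z * Complex.exp (-(b * z))) 0 z := by
      intro z
      have h1 := (hE z).hasDerivAt
      have h2 := h1.mul (((hasDerivAt_id' z).const_mul b).neg.cexp)
      convert! h2 using 1
      have h3 := hD z
      rw [logDeriv_apply, div_eq_iff (hEne z)] at h3
      rw [h3]; ring
    intro s
    have hc := is_const_of_deriv_eq_zero (𝕜 := ℂ) (f := fun z => E z * Complex.exp (-(b * z)))
      (fun z => (hder z).differentiableAt) (fun z => (hder z).deriv) s 0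
    simp only [hE0, mul_zero, neg_zero, Complex.exp_zero, mul_one] at hc
    rw [Complex.exp_neg] at hc
    field_simp at hc
    exact hc
  obtain ⟨A, hA, hAb⟩ := list_prod_bound Z
  have hxi : ∀ s, ‖riemannXi s‖ ≤ Real.exp ((A + ‖b‖) * ‖s‖) := by
    intro s
    rw [hfac, norm_mul, add_mul, Real.exp_add, hEexp]
    gcongr
    · exact hAb s
    · refine (Complex.norm_exp_le_exp_norm _).trans ?_
      rw [norm_mul]
  set C := Real.pi * Real.exp ((A + ‖b‖) * 2) with hC
  have hC0 : 0 < C := by positivity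
  have hlow : ∀ m : ℕ, 1 ≤ m → (m.factorial : ℝ) ≤ C ^ (m + 1) := by
    intro m hm
    refine (xi_lower m hm).trans ?_
    rw [hC, mul_pow, ← Real.exp_nat_mul]
    gcongr
    refine (hxi _).trans (Real.exp_le_exp.mpr (le_of_eq ?_))
    rw [norm_mul, Complex.norm_natCast]
    simp
    ring
  have ht := FloorSemiring.tendsto_pow_div_factorial_atTop C
  obtain ⟨m, hm1, hm2⟩ := ((ht.eventually_lt_const (show (0:ℝ) < 1 / C by positivity)).and
    (Filter.eventually_ge_atTop 1)).exists
  have := hlow m hm2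
  rw [div_lt_div_iff₀ (by positivity) hC0] at hm1
  rw [pow_succ] at this
  linarith

lemma iter_inv_sub {c : ℂ} (n : ℕ) :
    iteratedDeriv n (fun z : ℂ => (c - z)⁻¹) 0 = n.factorial * (c⁻¹) ^ (n + 1) := by
  have h := iter_deriv_inv_linear n (-1 : ℂ) c
  have e : (fun z : ℂ => (c - z)⁻¹) = (fun x => (-1 * x + c)⁻¹) := by
    funext z; congr 1; ring
  rw [e, iteratedDeriv_eq_iterate, h]
  simp only [mul_zero, zero_add]
  rw [show (-1 - (n:ℤ)) = -((n + 1 : ℕ) : ℤ) by push_cast; ring, zpow_neg, zpow_natCast, inv_pow]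
  have : (-1 : ℂ) ^ n * (-1) ^ n = 1 := by rw [← mul_pow]; simp
  linear_combination (n.factorial : ℂ) * (c ^ (n+1))⁻¹ * this

lemma iter_logDeriv_mul {f g : ℂ → ℂ} (hf : AnalyticAt ℂ f 0) (hg : AnalyticAt ℂ g 0)
    (hf0 : f 0 ≠ 0) (hg0 : g 0 ≠ 0) (n : ℕ) :
    iteratedDeriv n (logDeriv (fun z => f z * g z)) 0 =
      iteratedDeriv n (logDeriv f) 0 + iteratedDeriv n (logDeriv g) 0 := by
  have h1 : AnalyticAt ℂ (logDeriv f) 0 := hf.deriv.div hf hf0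
  have h2 : AnalyticAt ℂ (logDeriv g) 0 := hg.deriv.div hg hg0
  rw [← iteratedDeriv_add h1.contDiffAt h2.contDiffAt]
  apply Filter.EventuallyEq.iteratedDeriv_eq
  filter_upwards [hf.eventually_analyticAt, hg.eventually_analyticAt,
    hf.continuousAt.eventually_ne hf0, hg.continuousAt.eventually_ne hg0] with z a b c d
  exact logDeriv_mul z c d a.differentiableAt b.differentiableAt

lemma iter_logDeriv_factor {w : ℂ} (hw : w ≠ 0) (n : ℕ) :
    iteratedDeriv n (logDeriv (fun z : ℂ => (w - z) * (1 - z)⁻¹)) 0 =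
      n.factorial * (1 - (w⁻¹) ^ (n + 1)) := by
  have h1 : AnalyticAt ℂ (fun z : ℂ => (w - z)⁻¹) 0 := by
    refine AnalyticAt.inv (by fun_prop) (by simpa using hw)
  have h2 : AnalyticAt ℂ (fun z : ℂ => (1 - z)⁻¹) 0 := by
    refine AnalyticAt.inv (by fun_prop) (by simp)
  have e : logDeriv (fun z : ℂ => (w - z) * (1 - z)⁻¹) =ᶠ[nhds 0]
      ((fun z : ℂ => (1 - z)⁻¹) - fun z : ℂ => (w - z)⁻¹) := by
    have a : ∀ᶠ z : ℂ in nhds 0, w - z ≠ 0 :=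
      ContinuousAt.eventually_ne (by fun_prop) (by simpa using hw)
    have b : ∀ᶠ z : ℂ in nhds 0, 1 - z ≠ 0 :=
      ContinuousAt.eventually_ne (by fun_prop) (by simp)
    filter_upwards [a, b] with z ha hb
    have h3 := ((hasDerivAt_id' z).const_sub w).mul (((hasDerivAt_id' z).const_sub 1).inv hb)
    rw [logDeriv_apply]
    have h4 : deriv (fun z : ℂ => (w - z) * (1 - z)⁻¹) z = _ := h3.deriv
    rw [h4]
    simp only [Pi.sub_apply, Pi.inv_apply]
    field_simp
    ring
  rw [e.iteratedDeriv_eq, iteratedDeriv_sub h2.contDiffAt h1.contDiffAt, iter_inv_sub, iter_inv_sub]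
  simp
  ring

lemma iter_logDeriv_list (Z : List ℂ) (hZ : ∀ ρ ∈ Z, 1 - ρ⁻¹ ≠ 0) (n : ℕ) :
    ∀ {G : ℂ → ℂ}, AnalyticAt ℂ G 0 → G 0 ≠ 0 →
    iteratedDeriv n (logDeriv (fun z : ℂ =>
      (Z.map (fun ρ => ((1 - ρ⁻¹) - z) * (1 - z)⁻¹)).prod * G z)) 0 =
      n.factorial * (Z.map (fun ρ => 1 - ((1 - ρ⁻¹)⁻¹) ^ (n + 1))).sum
        + iteratedDeriv n (logDeriv G) 0 := by
  induction Z with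
  | nil => intro G _ _; simp
  | cons ρ Z ih =>
    intro G hG hG0
    have hρ := hZ ρ List.mem_cons_self
    have h2 : AnalyticAt ℂ (fun z : ℂ => (1 - ρ⁻¹ - z) * (1 - z)⁻¹) 0 :=
      AnalyticAt.mul (by fun_prop) (AnalyticAt.inv (by fun_prop) (by simp))
    have h3 := ih (fun ρ h => hZ ρ (List.mem_cons_of_mem _ h))
      (G := fun z => ((1 - ρ⁻¹ - z) * (1 - z)⁻¹) * G z) (h2.mul hG) (by simpa using ⟨hρ, hG0⟩)
    rw [iter_logDeriv_mul h2 hG (by simpa using hρ) hG0, iter_logDeriv_factor hρ] at h3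
    simp only [List.map_cons, List.prod_cons, List.sum_cons]
    have e : (fun z : ℂ => (1 - ρ⁻¹ - z) * (1 - z)⁻¹ *
        (Z.map (fun ρ => ((1 - ρ⁻¹) - z) * (1 - z)⁻¹)).prod * G z) =
        fun z => (Z.map (fun ρ => ((1 - ρ⁻¹) - z) * (1 - z)⁻¹)).prod *
          (((1 - ρ⁻¹ - z) * (1 - z)⁻¹) * G z) := by
      funext z; ring
    rw [e, h3]
    ring

lemma logDeriv_list (Z : List ℂ) (s : ℂ) (hZ : ∀ ρ ∈ Z, ρ ≠ 0 ∧ ρ ≠ s) :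
    ∀ {G : ℂ → ℂ}, Differentiable ℂ G → G s ≠ 0 →
    logDeriv (fun z : ℂ => (Z.map (fun ρ => 1 - z / ρ)).prod * G z) s =
      (Z.map (fun ρ => (s - ρ)⁻¹)).sum + logDeriv G s := by
  induction Z with
  | nil => intro G _ _; simp
  | cons ρ Z ih =>
    intro G hG hG0
    obtain ⟨hρ, hρs⟩ := hZ ρ List.mem_cons_self
    have hd : Differentiable ℂ (fun z : ℂ => 1 - z / ρ) := by fun_prop
    have hn : 1 - s / ρ ≠ 0 := by
      rw [sub_ne_zero]; intro h; rw [eq_div_iff hρ] at h; apply hρs; simpa using h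
    have hns : s - ρ ≠ 0 := sub_ne_zero.mpr hρs.symm
    have h3 := ih (fun ρ h => hZ ρ (List.mem_cons_of_mem _ h))
      (G := fun z => (1 - z / ρ) * G z) (hd.mul hG) (mul_ne_zero hn hG0)
    rw [logDeriv_mul s hn hG0 (hd s) (hG s)] at h3
    have h4 : logDeriv (fun z : ℂ => 1 - z / ρ) s = (s - ρ)⁻¹ := by
      rw [logDeriv_apply]
      have : deriv (fun z : ℂ => 1 - z / ρ) s = _ :=
        (((hasDerivAt_id' s).div_const ρ).const_sub 1).deriv
      rw [this]
      rw [div_eq_iff hn]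
      field_simp
      ring
    simp only [List.map_cons, List.prod_cons, List.sum_cons]
    have e : (fun z : ℂ => (1 - z / ρ) * (Z.map (fun ρ => 1 - z / ρ)).prod * G z) =
        fun z => (Z.map (fun ρ => 1 - z / ρ)).prod * ((1 - z / ρ) * G z) := by
      funext z; ring
    rw [e, h3, h4]
    ring

lemma sum_re_anti (Z : List ℂ) (hZ : ∀ ρ ∈ Z, ρ.re = 1 / 2) :
    (Z.map (fun ρ => (1 - ρ)⁻¹)).sum.re + (Z.map (fun ρ => (0 - ρ)⁻¹)).sum.re = 0 := by
  induction Z with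
  | nil => simp
  | cons ρ Z ih =>
    have h1 := ih (fun ρ h => hZ ρ (List.mem_cons_of_mem _ h))
    have hρ := hZ ρ List.mem_cons_self
    have h2 : ((1 - ρ)⁻¹).re + ((0 - ρ)⁻¹).re = 0 := by
      have : 1 - ρ = (starRingEnd ℂ) ρ := by
        apply Complex.ext
        · simp [hρ]; norm_num
        · simp
      rw [this, zero_sub, inv_neg, ← map_inv₀, Complex.conj_re, Complex.neg_re]
      ring
    simp only [List.map_cons, List.sum_cons, Complex.add_re]
    linarith

lemma logDeriv_xi_one : logDeriv riemannXi 1 = - logDeriv riemannXi 0 := by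
  rw [logDeriv_apply, logDeriv_apply, xi_one, xi_zero, div_one, div_one]
  have h1 : deriv (fun s => riemannXi (1 - s)) 0 = - deriv riemannXi (1 - 0) :=
    deriv_comp_const_sub _ _ _
  rw [show (fun s => riemannXi (1 - s)) = riemannXi from funext xi_one_sub] at h1
  rw [h1]; simp

/-- Contribution of the zero-free factor. -/
lemma iter_E_part {E : ℂ → ℂ} (hE : Differentiable ℂ E) (hne : ∀ s, ‖s‖ ≤ 8 → E s ≠ 0) {δ : ℝ}
    (hδ : ∀ s, ‖s‖ ≤ 2 → ‖logDeriv E s - logDeriv E 0‖ ≤ δ) (n : ℕ) :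
    ‖iteratedDeriv n (logDeriv (fun z => E ((1 - z)⁻¹))) 0
      - (n + 1).factorial * logDeriv E 1‖ ≤ n.factorial * (8 * δ) / (1 / 2) ^ n := by
  have hnz : ∀ z : ℂ, ‖z‖ < 7 / 8 → 1 - z ≠ 0 := by
    intro z hz h
    rw [← sub_eq_zero.mp h] at hz
    norm_num at hz
  have hs8 : ∀ z : ℂ, ‖z‖ < 7 / 8 → ‖(1 - z)⁻¹‖ ≤ 8 := by
    intro z hz
    have h := norm_sub_norm_le 1 z
    rw [norm_one] at h
    rw [norm_inv]
    exact inv_le_of_inv_le₀ (by norm_num) (by norm_num; linarith)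
  have hs2 : ∀ z : ℂ, ‖z‖ ≤ 1 / 2 → ‖(1 - z)⁻¹‖ ≤ 2 := by
    intro z hz
    have h := norm_sub_norm_le 1 z
    rw [norm_one] at h
    rw [norm_inv]
    exact inv_le_of_inv_le₀ (by norm_num) (by norm_num; linarith)
  have hm : ∀ z : ℂ, ‖z‖ < 7 / 8 → HasDerivAt (fun z : ℂ => (1 - z)⁻¹) (((1 - z)⁻¹) ^ 2) z := by
    intro z hz
    have h1 := hnz z hz
    have h2 := ((hasDerivAt_id' z).const_sub 1).inv h1
    convert! h2 using 1
    field_simp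
  have hDdiff : ∀ s, ‖s‖ ≤ 8 → DifferentiableAt ℂ (logDeriv E) s := fun s hs =>
    ((hE.analyticAt s).deriv.div (hE.analyticAt s) (hne s hs)).differentiableAt
  let H : ℂ → ℂ := fun z => ((1 - z)⁻¹) ^ 2 * (logDeriv E ((1 - z)⁻¹) - logDeriv E 1)
  let K : ℂ → ℂ := fun z => logDeriv E 1 * ((1 - z)⁻¹) ^ 2
  have hHd : ∀ z : ℂ, ‖z‖ < 7 / 8 → DifferentiableAt ℂ H z := by
    intro z hz
    refine ((hm z hz).differentiableAt.pow 2).mul (DifferentiableAt.sub_const ?_ _)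
    exact DifferentiableAt.comp z (hDdiff _ (hs8 z hz)) (hm z hz).differentiableAt
  have hU : Metric.ball (0:ℂ) (7 / 8) ∈ nhds (0:ℂ) := Metric.ball_mem_nhds _ (by norm_num)
  have hHa : AnalyticAt ℂ H 0 := by
    refine DifferentiableOn.analyticAt (s := Metric.ball 0 (7 / 8)) (fun z hz => ?_) hU
    exact (hHd z (by simpa using hz)).differentiableWithinAt
  have hKa : AnalyticAt ℂ K 0 := by
    refine analyticAt_const.mul (AnalyticAt.pow (AnalyticAt.inv (by fun_prop) (by simp)) 2)
  have e : logDeriv (fun z => E ((1 - z)⁻¹)) =ᶠ[nhds 0] H + K := by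
    filter_upwards [hU] with z hz
    have hz' : ‖z‖ < 7 / 8 := by simpa using hz
    rw [logDeriv_apply]
    have : deriv (fun z => E ((1 - z)⁻¹)) z = _ :=
      ((hE ((1 - z)⁻¹)).hasDerivAt.comp z (hm z hz')).deriv
    rw [this]
    simp only [Pi.add_apply, H, K, logDeriv_apply]
    ring
  have hK : iteratedDeriv n K 0 = (n + 1).factorial * logDeriv E 1 := by
    have h1 : iteratedDeriv n (fun z : ℂ => ((1 - z)⁻¹) ^ 2) 0 = (n + 1).factorial := by
      have h2 := iter_inv_sub (c := 1) (n + 1)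
      rw [iteratedDeriv_succ'] at h2
      have h3 : deriv (fun z : ℂ => (1 - z)⁻¹) =ᶠ[nhds 0] (fun z : ℂ => ((1 - z)⁻¹) ^ 2) := by
        filter_upwards [hU] with z hz
        exact (hm z (by simpa using hz)).deriv
      rw [h3.iteratedDeriv_eq] at h2
      simpa using h2
    have h2 : iteratedDeriv n K 0 = logDeriv E 1 * iteratedDeriv n (fun z : ℂ => ((1 - z)⁻¹) ^ 2) 0 := by
      exact iteratedDeriv_const_mul_field _ _
    rw [h2, h1, mul_comm]
  rw [e.iteratedDeriv_eq, iteratedDeriv_add hHa.contDiffAt hKa.contDiffAt, hK, add_sub_cancel_right]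
  refine Complex.norm_iteratedDeriv_le_of_forall_mem_sphere_norm_le n (by norm_num) ?_ ?_
  · refine DifferentiableOn.diffContOnCl (fun z hz => ?_)
    rw [closure_ball _ (by norm_num)] at hz
    have hz' : ‖z‖ ≤ 1 / 2 := by simpa using hz
    exact (hHd z (by linarith)).differentiableWithinAt
  · intro z hz
    have hz' : ‖z‖ = 1 / 2 := by simpa using hz
    have h2 := hs2 z hz'.le
    have a := hδ _ h2
    have b := hδ 1 (by simp)
    have c : ‖logDeriv E ((1 - z)⁻¹) - logDeriv E 1‖ ≤ 2 * δ := by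
      have := norm_sub_le (logDeriv E ((1 - z)⁻¹) - logDeriv E 0) (logDeriv E 1 - logDeriv E 0)
      rw [sub_sub_sub_cancel_right] at this
      linarith
    simp only [H]
    rw [norm_mul, norm_pow]
    calc ‖(1 - z)⁻¹‖ ^ 2 * ‖logDeriv E ((1 - z)⁻¹) - logDeriv E 1‖ ≤ 2 ^ 2 * (2 * δ) := by gcongr
      _ = 8 * δ := by ring

lemma norm_w {ρ : ℂ} (h : ρ.re = 1 / 2) : ‖1 - ρ⁻¹‖ = 1 := by
  have h0 : ρ ≠ 0 := by rintro rfl; norm_num at h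
  have h1 : 1 - ρ⁻¹ = -((starRingEnd ℂ) ρ) / ρ := by
    have : (starRingEnd ℂ) ρ = 1 - ρ := by
      apply Complex.ext
      · simp [h]; norm_num
      · simp
    rw [this]; field_simp; ring
  rw [h1, norm_div, norm_neg, Complex.norm_conj, div_self (norm_ne_zero_iff.mpr h0)]

lemma li_lower (hRH : ∀ ρ, riemannXi ρ = 0 → ρ.re = 1 / 2) (n : ℕ) {ρ₀ : ℂ}
    (hρ₀ : riemannXi ρ₀ = 0) {δ : ℝ} (hδ : 0 < δ) :
    (1 - ((1 - ρ₀⁻¹)⁻¹) ^ (n + 1)).re - (n + 1 + 8 * 2 ^ n) * δ ≤ (liCoeff (n + 1)).re := by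
  obtain ⟨R₀, hR₀⟩ := xi_growth (ε := δ / 1152) (by positivity)
  let R := max (max R₀ ‖ρ₀‖) 8
  have hR1 : R₀ ≤ R := (le_max_left _ _).trans (le_max_left _ _)
  have hR2 : ‖ρ₀‖ ≤ R := (le_max_right _ _).trans (le_max_left _ _)
  have hR3 : 8 ≤ R := le_max_right _ _
  have hR : 0 < R := by linarith
  have hM : ∀ s ∈ Metric.sphere (0:ℂ) (3 * R),
      ‖riemannXi s‖ ≤ Real.exp (δ / 1152 * (3 * R) ^ 2) := fun s hs =>
    hR₀ (3 * R) (by linarith) s (by simpa using (le_of_eq (mem_sphere_zero_iff_norm.mp hs)))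
  obtain ⟨Z, E, hE, hE0, hZ, hfac, hne, hbd⟩ := factor_max xi_differentiable xi_zero hR hM
  have hZre : ∀ ρ ∈ Z, ρ.re = 1 / 2 := fun ρ h => hRH ρ (hZ ρ h).1
  have hest : ∀ s, ‖s‖ ≤ 2 → ‖logDeriv E s - logDeriv E 0‖ ≤ δ := by
    intro s hs
    refine (logDeriv_est hE hE0 hR (A := δ / 1152 * (3 * R) ^ 2) (by positivity) hne
      (fun s hs => hbd s (by linarith)) (s := s) (by linarith)).trans ?_
    have e : 64 * (δ / 1152 * (3 * R) ^ 2) / R ^ 2 * ‖s‖ = δ / 2 * ‖s‖ := by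
      field_simp; ring
    rw [e]
    nlinarith
  have hpart := iter_E_part hE (fun s hs => hne s (by linarith)) hest n
  -- real part of `logDeriv E 1`
  have hb : |(logDeriv E 1).re| ≤ δ := by
    have hfun : riemannXi = fun z : ℂ => (Z.map (fun ρ => 1 - z / ρ)).prod * E z := funext hfac
    have l1 : logDeriv riemannXi 1 = (Z.map (fun ρ => (1 - ρ)⁻¹)).sum + logDeriv E 1 := by
      rw [hfun]
      exact logDeriv_list Z 1 (fun ρ h => ⟨(hZ ρ h).2, by
        rintro rfl; have := hZre 1 h; norm_num at this⟩) hE (hne 1 (by simp; linarith))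
    have l0 : logDeriv riemannXi 0 = (Z.map (fun ρ => (0 - ρ)⁻¹)).sum + logDeriv E 0 := by
      rw [hfun]
      exact logDeriv_list Z 0 (fun ρ h => ⟨(hZ ρ h).2, (hZ ρ h).2⟩) hE (hne 0 (by simp; linarith))
    have l2 := logDeriv_xi_one
    rw [l1, l0] at l2
    have l3 := congrArg Complex.re l2
    simp only [Complex.add_re, Complex.neg_re] at l3
    have l4 := sum_re_anti Z hZre
    have l5 := (Complex.abs_re_le_norm _).trans (hest 1 (by simp))
    rw [Complex.sub_re, abs_le] at l5
    rw [abs_le]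
    constructor <;> linarith
  have hw : ∀ ρ ∈ Z, 1 - ρ⁻¹ ≠ 0 := by
    intro ρ h h'
    have := norm_w (hZre ρ h)
    rw [h', norm_zero] at this
    norm_num at this
  have hphi : logDeriv liPhi =ᶠ[nhds 0] logDeriv (fun z : ℂ =>
      (Z.map (fun ρ => ((1 - ρ⁻¹) - z) * (1 - z)⁻¹)).prod * E ((1 - z)⁻¹)) := by
    have hne1 : ∀ᶠ z : ℂ in nhds 0, z ≠ 1 := eventually_ne_nhds zero_ne_one
    have : ∀ z : ℂ, z ≠ 1 → liPhi z = (Z.map (fun ρ => ((1 - ρ⁻¹) - z) * (1 - z)⁻¹)).prod * E ((1 - z)⁻¹) := by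
      intro z hz
      have hz' : 1 - z ≠ 0 := sub_ne_zero.mpr hz.symm
      rw [liPhi, hfac]
      congr 2
      refine List.map_congr_left fun ρ h => ?_
      have := (hZ ρ h).2
      field_simp
      ring
    filter_upwards [hne1.eventually_nhds] with z hz
    refine Filter.EventuallyEq.eq_of_nhds (logDeriv_congr_nhds ?_)
    filter_upwards [hz] with w hw
    exact this w hw
  have hG : AnalyticAt ℂ (fun z : ℂ => E ((1 - z)⁻¹)) 0 :=
    AnalyticAt.fun_comp (hE.analyticAt _) (AnalyticAt.inv (by fun_prop) (by simp))
  have hlist := iter_logDeriv_list Z hw n hG (hne _ (by simp; linarith))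
  rw [liCoeff_eq, hphi.iteratedDeriv_eq, hlist]
  set X := iteratedDeriv n (logDeriv (fun z => E ((1 - z)⁻¹))) 0
  set S := (Z.map (fun ρ => 1 - ((1 - ρ⁻¹)⁻¹) ^ (n + 1))).sum with hS
  have hfn : (n.factorial : ℂ) ≠ 0 := by exact_mod_cast n.factorial_ne_zero
  have hsplit : 1 / (n.factorial : ℂ) * (n.factorial * S + X) =
      S + ((n + 1 : ℝ) : ℂ) * logDeriv E 1
        + ((1 / n.factorial : ℝ) : ℂ) * (X - (n + 1).factorial * logDeriv E 1) := by
    rw [Nat.factorial_succ]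
    push_cast
    field_simp
    ring
  have hnn : ∀ ρ ∈ Z, 0 ≤ (1 - ((1 - ρ⁻¹)⁻¹) ^ (n + 1)).re := by
    intro ρ h
    have h1 := Complex.re_le_norm (((1 - ρ⁻¹)⁻¹) ^ (n + 1))
    rw [norm_pow, norm_inv, norm_w (hZre ρ h), inv_one, one_pow] at h1
    rw [Complex.sub_re, Complex.one_re]
    linarith
  have hmem : ρ₀ ∈ Z := by
    have h1 := hfac ρ₀
    rw [hρ₀] at h1
    have h2 := (mul_eq_zero.mp h1.symm).resolve_right (hne ρ₀ hR2)
    rw [List.prod_eq_zero_iff, List.mem_map] at h2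
    obtain ⟨ρ, hρ, h3⟩ := h2
    rw [sub_eq_zero, eq_div_iff (hZ ρ hρ).2, one_mul] at h3
    rwa [← h3]
  have hSre : (1 - ((1 - ρ₀⁻¹)⁻¹) ^ (n + 1)).re ≤ S.re := by
    have h1 : S.re = (Z.map (fun ρ => (1 - ((1 - ρ⁻¹)⁻¹) ^ (n + 1)).re)).sum := by
      rw [hS]
      have := map_list_sum Complex.reAddGroupHom (Z.map (fun ρ => 1 - ((1 - ρ⁻¹)⁻¹) ^ (n + 1)))
      rw [List.map_map] at this
      exact this
    rw [h1]
    refine List.single_le_sum ?_ _ (List.mem_map.mpr ⟨ρ₀, hmem, rfl⟩)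
    intro x hx
    obtain ⟨ρ, hρ, rfl⟩ := List.mem_map.mp hx
    exact hnn ρ hρ
  rw [hsplit, Complex.add_re, Complex.add_re, Complex.re_ofReal_mul, Complex.re_ofReal_mul]
  have hX := (Complex.abs_re_le_norm _).trans hpart
  have hfp : (0:ℝ) < n.factorial := by exact_mod_cast n.factorial_pos
  have t1 : -((n + 1) * δ) ≤ (n + 1 : ℝ) * (logDeriv E 1).re := by
    have := (abs_le.mp hb).1
    have hn : (0:ℝ) < n + 1 := by positivity
    nlinarith
  have t2 : -(8 * 2 ^ n * δ) ≤ (1 / n.factorial : ℝ) * (X - (n + 1).factorial * logDeriv E 1).re := by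
    have h1 := (abs_le.mp hX).1
    have h2 : (n.factorial : ℝ) * (8 * δ) / (1 / 2) ^ n = n.factorial * (8 * 2 ^ n * δ) := by
      rw [one_div, inv_pow, div_inv_eq_mul]; ring
    rw [h2] at h1
    rw [one_div, inv_mul_eq_div, le_div_iff₀ hfp]
    linarith
  linarith

lemma exists_good_zero (n : ℕ) (hRH : ∀ ρ, riemannXi ρ = 0 → ρ.re = 1 / 2) :
    ∃ ρ, riemannXi ρ = 0 ∧ 0 < (1 - ((1 - ρ⁻¹)⁻¹) ^ (n + 1)).re := by
  have hfin : {w : ℂ | w ^ (n + 1) = 1}.Finite := by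
    have := (Polynomial.nthRootsFinset (n + 1) (1 : ℂ)).finite_toSet
    refine this.subset fun w hw => ?_
    simpa [Polynomial.mem_nthRootsFinset (Nat.succ_pos n)] using hw
  have hfin2 : ((fun w : ℂ => ‖(1 - w⁻¹)⁻¹‖) '' {w : ℂ | w ^ (n + 1) = 1}).Finite := hfin.image _
  obtain ⟨B, hB⟩ := hfin2.bddAbove
  obtain ⟨ρ, hρ, hρB⟩ := xi_zeros_unbounded B
  refine ⟨ρ, hρ, ?_⟩
  by_contra! hle
  have hn : ‖((1 - ρ⁻¹)⁻¹) ^ (n + 1)‖ = 1 := by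
    rw [norm_pow, norm_inv, norm_w (hRH ρ hρ), inv_one, one_pow]
  set u := ((1 - ρ⁻¹)⁻¹) with hu
  rw [Complex.sub_re, Complex.one_re] at hle
  have h1 : (u ^ (n + 1)).re = 1 := le_antisymm (hn ▸ Complex.re_le_norm _) (by linarith)
  have h2 : u ^ (n + 1) = 1 := by
    have h3 : Complex.normSq (u ^ (n + 1)) = 1 := by rw [Complex.normSq_eq_norm_sq, hn, one_pow]
    rw [Complex.normSq_apply, h1] at h3
    apply Complex.ext
    · simpa using h1
    · simp only [Complex.one_im]; nlinarith
  have := hB ⟨u, h2, rfl⟩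
  simp only [hu, inv_inv, sub_sub_cancel] at this
  linarith

lemma li_of_rh (h : ∀ s : ℂ, 0 < s.re → s.re < 1 → riemannZeta s = 0 → s.re = 1 / 2)
    (n : ℕ) (hn : 1 ≤ n) : 0 < (liCoeff n).re := by
  have hRH : ∀ ρ, riemannXi ρ = 0 → ρ.re = 1 / 2 := by
    intro ρ hρ
    obtain ⟨a, b, c⟩ := xi_zero_strip hρ
    exact h ρ a b c
  obtain ⟨n, rfl⟩ : ∃ m, n = m + 1 := ⟨n - 1, by omega⟩
  obtain ⟨ρ, hρ, hpos⟩ := exists_good_zero n hRH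
  set g := (1 - ((1 - ρ⁻¹)⁻¹) ^ (n + 1)).re
  have hk : (0:ℝ) < n + 1 + 8 * 2 ^ n := by positivity
  have := li_lower hRH n hρ (δ := g / (2 * (n + 1 + 8 * 2 ^ n))) (by positivity)
  have e : (n + 1 + 8 * 2 ^ n : ℝ) * (g / (2 * (n + 1 + 8 * 2 ^ n))) = g / 2 := by
    field_simp
  rw [e] at this
  linarith

/-- **Li's criterion.** The Riemann Hypothesis holds if and only if `Re(λ_n) > 0`
for every integer `n ≥ 1`. -/
theorem li_criterion :
    (∀ s : ℂ, 0 < s.re → s.re < 1 → riemannZeta s = 0 → s.re = 1 / 2) ↔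
      (∀ n : ℕ, 1 ≤ n → 0 < (liCoeff n).re) := by
  exact ⟨li_of_rh, fun h s h0 h1 hz => rh_of_li h s h0 h1 hz⟩
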